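/- Let n ≥ 2 be an integer, Γ = ℝ × {0, 1, …, n−1}, and let Λ ⊂ ℝ² be a closed set that is 2-periodic with respect to the second variable. If (Γ, Λ) is a Heisenberg uniqueness pair, then the set Π̃_ne(Λ) = Π^n(Λ) ∪ (Π^1(Λ) \ Π^{1*}(Λ)) ∪ (Π^{n−1}(Λ) \ Π^{(n−1)*}(Λ)) ∪ ⋃_{j=2}^{n−2} (Π^j(Λ) \ Π^{j*}_{ne}(Λ)) is dense in ℝ. -/

import Mathlib

open MeasureTheory Complex

/-- Fourier transform with the convention `f̂(ξ) = ∫ e^{πixξ} f(x) dx`. -/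
noncomputable def FT (f : ℝ → ℂ) (ξ : ℝ) : ℂ :=
  ∫ x : ℝ, Complex.exp (Real.pi * Complex.I * x * ξ) * f x

/-- `e^{πiη}`. -/
noncomputable def cexpEta (η : ℝ) : ℂ := Complex.exp (Real.pi * Complex.I * η)

/-- `Λ` is 2-periodic with respect to the second variable. -/
def Periodic2 (Λ : Set (ℝ × ℝ)) : Prop :=
  ∀ ξ η : ℝ, (ξ, η) ∈ Λ ↔ (ξ, η + 2) ∈ Λ

/-- The projection `Π(Λ)` of `Λ` on the x-axis. -/
def proj (Λ : Set (ℝ × ℝ)) : Set ℝ := {ξ | ∃ η : ℝ, (ξ, η) ∈ Λ}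

/-- `Img(ξ) = {η ∈ [0,2) : (ξ,η) ∈ Λ}`. -/
def Img (Λ : Set (ℝ × ℝ)) (ξ : ℝ) : Set ℝ := {η | η ∈ Set.Ico (0 : ℝ) 2 ∧ (ξ, η) ∈ Λ}

/-- `Π^k(Λ)` for `k < n`: points of `Π(Λ)` whose `Img` has exactly `k` elements. -/
def projExact (Λ : Set (ℝ × ℝ)) (k : ℕ) : Set ℝ :=
  {ξ | ξ ∈ proj Λ ∧ (Img Λ ξ).encard = k}

/-- `Π^n(Λ)`: points of `Π(Λ)` whose `Img` has at least `n` elements. -/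
def projAtLeast (Λ : Set (ℝ × ℝ)) (n : ℕ) : Set ℝ :=
  {ξ | ξ ∈ proj Λ ∧ (n : ℕ∞) ≤ (Img Λ ξ).encard}

/-- `ψ ∈ P^{E,ξ}_l` : there are an open interval `I ∋ ξ` and `φ_1,…,φ_{l-1} ∈ L¹(ℝ)` with
`φ̂_1 + φ̂_2 ψ + ⋯ + φ̂_{l-1} ψ^{l-2} + ψ^{l-1} = 0` on `I ∩ E`. -/
def Pmem (E : Set ℝ) (ξ : ℝ) (l : ℕ) (ψ : ℝ → ℂ) : Prop :=
  ∃ a b : ℝ, ξ ∈ Set.Ioo a b ∧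
    ∃ φ : Fin (l - 1) → ℝ → ℂ, (∀ i, Integrable (φ i)) ∧
      ∀ x ∈ Set.Ioo a b ∩ E,
        (∑ i : Fin (l - 1), FT (φ i) x * ψ x ^ (i : ℕ)) + ψ x ^ (l - 1) = 0

/-- `Π^{1*}(Λ)`: those `ξ ∈ Π^1(Λ)` such that `χ ∈ P^{Π^1(Λ),ξ}_n`, where
`χ(ξ') = e^{πiη}` with `η` the unique element of `Img(ξ')`. -/
def projOneStar (Λ : Set (ℝ × ℝ)) (n : ℕ) : Set ℝ :=
  {ξ | ξ ∈ projExact Λ 1 ∧ ∃ χ : ℝ → ℂ,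
    (∀ ξ' ∈ projExact Λ 1, ∀ η ∈ Img Λ ξ', χ ξ' = cexpEta η) ∧
    Pmem (projExact Λ 1) ξ n χ}

/-- `Π^{k*}_{su}(Λ)`. -/
def projStarSu (Λ : Set (ℝ × ℝ)) (n k : ℕ) : Set ℝ :=
  {ξ | ξ ∈ projExact Λ k ∧ ∃ a b : ℝ, ξ ∈ Set.Ioo a b ∧
    ∃ φ : Fin (n - 1) → ℝ → ℂ, (∀ i, Integrable (φ i)) ∧
      ∀ ξ' ∈ Set.Ioo a b ∩ projExact Λ k, ∀ η ∈ Img Λ ξ',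
        (∑ i : Fin (n - 1), FT (φ i) ξ' * cexpEta η ^ (i : ℕ)) = -(cexpEta η ^ (n - 1))}

/-- `Π^{k*}_{ne}(Λ)` for `k ≥ 2`. -/
def projStarNe (Λ : Set (ℝ × ℝ)) (k : ℕ) : Set ℝ :=
  {ξ | ξ ∈ projExact Λ k ∧ ∃ a b : ℝ, ξ ∈ Set.Ioo a b ∧
    ∃ φ : Fin k → ℝ → ℂ, (∀ i, Integrable (φ i)) ∧
      ∀ ξ' ∈ Set.Ioo a b ∩ projExact Λ k, ∀ η ∈ Img Λ ξ',
        (∑ i : Fin k, FT (φ i) ξ' * cexpEta η ^ (i : ℕ)) = -(cexpEta η ^ k)}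

/-- `(Γ, Λ)` with `Γ = ℝ × {0,…,n-1}` is a Heisenberg uniqueness pair: every admissible
measure `μ = Σ_m (x ↦ (x,m))_*(f_m dx)` (with each `f_m ∈ L¹(ℝ)`) whose Fourier transform
`μ̂(ξ,η) = Σ_m e^{mπiη} f̂_m(ξ)` vanishes on `Λ` must be zero, i.e. each `f_m = 0` a.e. -/
def IsHUP (n : ℕ) (Λ : Set (ℝ × ℝ)) : Prop :=
  ∀ f : Fin n → ℝ → ℂ, (∀ m, Integrable (f m)) →
    (∀ ξ η : ℝ, (ξ, η) ∈ Λ → ∑ m : Fin n, cexpEta η ^ (m : ℕ) * FT (f m) ξ = 0) →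
    ∀ m, f m =ᵐ[volume] (0 : ℝ → ℂ)

open scoped FourierTransform Convolution

lemma FT_eq (f : ℝ → ℂ) (ξ : ℝ) : FT f ξ = 𝓕 f (-(ξ / 2)) := by
  rw [Real.fourier_real_eq_integral_exp_smul]
  unfold FT
  congr 1
  ext x
  rw [smul_eq_mul]
  congr 2
  push_cast
  ring

lemma FT_continuous {f : ℝ → ℂ} (hf : Integrable f) : Continuous (FT f) := by
  have h : Continuous (𝓕 f) :=
    VectorFourier.fourierIntegral_continuous (L := innerₗ ℝ) Real.continuous_fourierChar
      continuous_inner hf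
  have : FT f = fun ξ => 𝓕 f (-(ξ / 2)) := funext (FT_eq f)
  rw [this]
  exact h.comp (by fun_prop)

lemma FT_conv {f g : ℝ → ℂ} (hf : Integrable f) (hg : Integrable g) :
    ∃ h : ℝ → ℂ, Integrable h ∧ ∀ ξ, FT h ξ = FT f ξ * FT g ξ := by
  refine ⟨f ⋆[ContinuousLinearMap.mul ℂ ℂ] g, hf.integrable_convolution _ hg, fun ξ => ?_⟩
  rw [FT_eq, FT_eq, FT_eq]
  exact Real.fourier_mul_convolution_eq hf hg _

lemma FT_zero (ξ : ℝ) : FT (fun _ => 0) ξ = 0 := by simp [FT]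

lemma exists_bump (U : Set ℝ) (hU : IsOpen U) (c : ℝ) (hc : c ∈ U) :
    ∃ g : ℝ → ℂ, Integrable g ∧ (∀ ξ, ξ ∉ U → FT g ξ = 0) ∧ FT g c ≠ 0 := by
  have hV : (fun w : ℝ => -2 * w) ⁻¹' U ∈ nhds (-(c / 2)) := by
    apply (hU.preimage (by fun_prop)).mem_nhds
    simp only [Set.mem_preimage]
    convert hc using 1
    ring
  obtain ⟨f, h1, h2, h3, h4, h5⟩ := exists_contDiff_tsupport_subset (n := ⊤) hV
  have hs : HasCompactSupport (fun x => (f x : ℂ)) := h2.comp_left (g := fun x : ℝ => (x : ℂ)) (by simp)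
  have hd : ContDiff ℝ ((⊤ : ℕ∞) : WithTop ℕ∞) (fun x => (f x : ℂ)) := Complex.ofRealCLM.contDiff.comp h3
  let φ : SchwartzMap ℝ ℂ := hs.toSchwartzMap hd
  have key : 𝓕 (((𝓕⁻ φ : SchwartzMap ℝ ℂ)) : ℝ → ℂ) = fun x => (f x : ℂ) := by
    rw [← SchwartzMap.fourier_coe]
    rw [FourierTransform.fourier_fourierInv_eq]
    rfl
  refine ⟨(𝓕⁻ φ : SchwartzMap ℝ ℂ), SchwartzMap.integrable _, fun ξ hξ => ?_, ?_⟩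
  · rw [FT_eq, key]
    have : -(ξ / 2) ∉ tsupport f := fun h => hξ (by
      have := h1 h
      simp only [Set.mem_preimage] at this
      convert this using 1
      ring)
    simp [image_eq_zero_of_notMem_tsupport this]
  · rw [FT_eq, key]
    simp [h5]

lemma FT_ae_zero {g : ℝ → ℂ} (h : g =ᵐ[volume] (0 : ℝ → ℂ)) (ξ : ℝ) : FT g ξ = 0 := by
  rw [FT_eq, Real.fourier_congr_ae h]
  have := FT_zero ξ
  rw [FT_eq] at this
  exact this

lemma root_close {m : ℕ} (a : Fin m → ℂ) (S : Finset ℂ) (hS : S.card = m)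
    (hr : ∀ w ∈ S, (∑ i, a i * w ^ (i : ℕ)) + w ^ m = 0) (δ : ℝ) (hδ : 0 < δ) (z : ℂ)
    (hz : ‖(∑ i, a i * z ^ (i : ℕ)) + z ^ m‖ < δ ^ m) : ∃ w ∈ S, ‖w - z‖ < δ := by
  classical
  open Polynomial in
  let q : ℂ[X] := ∑ i : Fin m, C (a i) * X ^ (i : ℕ)
  let p : Polynomial ℂ := Polynomial.X ^ m + q
  have hq : q.degree < m := Polynomial.degree_sum_fin_lt a
  have hp : p.Monic := Polynomial.monic_X_pow_add hq
  have hdeg : p.natDegree = m := by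
    apply Polynomial.natDegree_eq_of_degree_eq_some
    rw [Polynomial.degree_add_eq_left_of_degree_lt] <;> simp [hq]
  have hev : ∀ w, p.eval w = (∑ i, a i * w ^ (i : ℕ)) + w ^ m := by
    intro w
    simp [p, q, Polynomial.eval_finsetSum, add_comm]
  let r : Polynomial ℂ := ∏ w ∈ S, (Polynomial.X - Polynomial.C w)
  have hrm : r.Monic := Polynomial.monic_prod_X_sub_C _ _
  have hdvd : r ∣ p := by
    have : S.val ≤ p.roots := by
      rw [Multiset.le_iff_subset S.nodup]
      intro w hw
      rw [Polynomial.mem_roots hp.ne_zero, Polynomial.IsRoot, hev]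
      exact hr w hw
    exact (Multiset.prod_X_sub_C_dvd_iff_le_roots hp.ne_zero S.val).2 this
  have heq : p = r := by
    apply Polynomial.eq_of_monic_of_dvd_of_natDegree_le hrm hp hdvd
    rw [hdeg, Polynomial.natDegree_prod_of_monic _ _ (fun w _ => Polynomial.monic_X_sub_C w)]
    simp [hS]
  by_contra! hcon
  rw [← hev, heq, Polynomial.eval_prod, norm_prod] at hz
  apply absurd hz
  rw [not_lt, ← hS, ← Finset.prod_const]
  apply Finset.prod_le_prod
  · intros; exact hδ.le
  · intro w hw
    simp only [Polynomial.eval_sub, Polynomial.eval_X, Polynomial.eval_C]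
    rw [norm_sub_rev]
    exact hcon w hw

lemma cexpEta_add_two (η : ℝ) : cexpEta (η + 2) = cexpEta η := by
  unfold cexpEta
  push_cast
  rw [mul_add, Complex.exp_add, show (Real.pi : ℂ) * I * 2 = 2 * Real.pi * I by ring,
    Complex.exp_two_pi_mul_I, mul_one]

lemma cexpEta_injOn : Set.InjOn cexpEta (Set.Ico (0 : ℝ) 2) := by
  intro x hx y hy h
  unfold cexpEta at h
  rw [Complex.exp_eq_exp_iff_exists_int] at h
  obtain ⟨k, hk⟩ := h
  have hpi : (Real.pi : ℂ) * I ≠ 0 := by simp [Real.pi_ne_zero]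
  have h1 : (x : ℂ) = y + 2 * k := by
    apply mul_left_cancel₀ hpi
    rw [hk]; ring
  have h2 : x = y + 2 * k := by exact_mod_cast h1
  obtain ⟨h3, h4⟩ := hx
  obtain ⟨h5, h6⟩ := hy
  have h7 : (k : ℝ) < 1 := by linarith
  have h8 : (-1 : ℝ) < k := by linarith
  have h9 : k < 1 := by exact_mod_cast h7
  have h10 : -1 < k := by exact_mod_cast h8
  have : k = 0 := by omega
  subst this
  simpa using h2

lemma cexpEta_continuous : Continuous cexpEta := by
  unfold cexpEta
  fun_prop

lemma reduce {Λ : Set (ℝ × ℝ)} (hper : Periodic2 Λ) {ξ η : ℝ} (h : (ξ, η) ∈ Λ) :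
    ∃ η' ∈ Img Λ ξ, cexpEta η' = cexpEta η := by
  have hp : Function.Periodic (fun t : ℝ => ((ξ, t) ∈ Λ)) 2 := fun t => propext (hper ξ t).symm
  have hc : Function.Periodic cexpEta 2 := cexpEta_add_two
  have e : toIcoMod (two_pos : (0 : ℝ) < 2) 0 η
      = η - (toIcoDiv (two_pos : (0 : ℝ) < 2) 0 η) • (2 : ℝ) := rfl
  refine ⟨toIcoMod (two_pos : (0 : ℝ) < 2) 0 η, ⟨?_, ?_⟩, ?_⟩
  · simpa using toIcoMod_mem_Ico (two_pos : (0 : ℝ) < 2) 0 η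
  · have := hp.sub_zsmul_eq (x := η) (toIcoDiv (two_pos : (0 : ℝ) < 2) 0 η)
    rw [e]
    exact this.symm ▸ h
  · rw [e]
    exact hc.sub_zsmul_eq _

lemma closed_F {Λ : Set (ℝ × ℝ)} (hclosed : IsClosed Λ) (z : ℂ) (δ : ℝ) :
    IsClosed {ζ : ℝ | ∃ η ∈ Set.Icc (0 : ℝ) 2, (ζ, η) ∈ Λ ∧ ‖cexpEta η - z‖ ≤ δ} := by
  have h1 : IsClosed {p : ℝ × Set.Icc (0 : ℝ) 2 |
      (p.1, (p.2 : ℝ)) ∈ Λ ∧ ‖cexpEta p.2 - z‖ ≤ δ} := by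
    apply IsClosed.inter
    · exact hclosed.preimage (f := fun p : ℝ × Set.Icc (0 : ℝ) 2 => (p.1, (p.2 : ℝ)))
        (by fun_prop)
    · have := cexpEta_continuous
      exact isClosed_le (f := fun p : ℝ × Set.Icc (0 : ℝ) 2 => ‖cexpEta p.2 - z‖)
        (by fun_prop) continuous_const
  have h2 := isClosedMap_fst_of_compactSpace (X := ℝ) (Y := Set.Icc (0 : ℝ) 2) _ h1
  convert h2 using 1
  ext ζ
  constructor
  · rintro ⟨η, h, h'⟩; exact ⟨(ζ, ⟨η, h⟩), h', rfl⟩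
  · rintro ⟨⟨ζ', η, h⟩, h', rfl⟩; exact ⟨η, h, h'⟩

lemma mem_proj_of {Λ : Set (ℝ × ℝ)} {ξ : ℝ} (h : (Img Λ ξ).encard ≠ 0) : ξ ∈ proj Λ := by
  obtain ⟨η, h⟩ := Set.encard_ne_zero.1 h
  exact ⟨η, h.2⟩

/-- finset of values -/
lemma values {Λ : Set (ℝ × ℝ)} {ξ : ℝ} {m : ℕ} (h : (Img Λ ξ).encard = m) :
    ∃ S : Finset ℂ, S.card = m ∧ ∀ w, w ∈ S ↔ ∃ η ∈ Img Λ ξ, cexpEta η = w := by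
  classical
  have hfin : (Img Λ ξ).Finite := Set.finite_of_encard_eq_coe h
  refine ⟨hfin.toFinset.image cexpEta, ?_, by simp⟩
  rw [Finset.card_image_of_injOn]
  · rw [hfin.encard_eq_coe_toFinset_card] at h
    exact_mod_cast h
  · intro x hx y hy
    simp only [Set.Finite.coe_toFinset] at hx hy
    exact cexpEta_injOn hx.1 hy.1

/-- The final contradiction from a local monic annihilator of degree `d < n`. -/
lemma finish {n d : ℕ} (hd : d < n) {Λ : Set (ℝ × ℝ)} (hper : Periodic2 Λ) (hHUP : IsHUP n Λ)
    (U : Set ℝ) (hU : IsOpen U) (hne : U.Nonempty) (φ : Fin d → ℝ → ℂ)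
    (hφ : ∀ i, Integrable (φ i))
    (h : ∀ ξ ∈ U, ∀ η ∈ Img Λ ξ,
      (∑ i : Fin d, FT (φ i) ξ * cexpEta η ^ (i : ℕ)) + cexpEta η ^ d = 0) : False := by
  obtain ⟨c, hc⟩ := hne
  obtain ⟨g, hg, hg0, hgc⟩ := exists_bump U hU c hc
  choose k hk hkF using fun i => FT_conv hg (hφ i)
  let F : ℕ → ℝ → ℂ := fun m => if hm : m < d then k ⟨m, hm⟩ else if m = d then g else fun _ => 0
  have hF : ∀ m, Integrable (F m) := by
    intro m
    simp only [F]
    split_ifs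
    · exact hk _
    · exact hg
    · exact integrable_zero _ _ _
  have := hHUP (fun m => F m) (fun m => hF m) ?_ ⟨d, hd⟩
  · apply hgc
    apply FT_ae_zero
    simpa [F] using this
  · intro ξ η hη
    obtain ⟨η', h1, h2⟩ := reduce hper hη
    rw [← h2, Fin.sum_univ_eq_sum_range (fun m => cexpEta η' ^ m * FT (F m) ξ) n]
    have h3 : ∑ m ∈ Finset.range n, cexpEta η' ^ m * FT (F m) ξ
        = ∑ m ∈ Finset.range (d + 1), cexpEta η' ^ m * FT (F m) ξ := by
      symm
      apply Finset.sum_subset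
      · intro x; simp only [Finset.mem_range]; omega
      · intro x _ hx
        simp only [Finset.mem_range] at hx
        have e : F x = fun _ => 0 := by
          simp only [F]
          rw [dif_neg (by omega), if_neg (by omega)]
        rw [e, FT_zero, mul_zero]
    rw [h3, Finset.sum_range_succ,
      ← Fin.sum_univ_eq_sum_range (fun m => cexpEta η' ^ m * FT (F m) ξ) d]
    have h4 : ∀ i : Fin d, cexpEta η' ^ (i : ℕ) * FT (F i) ξ
        = FT g ξ * (FT (φ i) ξ * cexpEta η' ^ (i : ℕ)) := by
      intro i
      have e : F i = k i := by simp [F]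
      rw [e, hkF]; ring
    have h5 : F d = g := by simp [F]
    rw [Finset.sum_congr rfl (fun i _ => h4 i), ← Finset.mul_sum, h5]
    by_cases hξ : ξ ∈ U
    · have := h ξ hξ η' h1
      linear_combination FT g ξ * this
    · rw [hg0 ξ hξ]; ring

/-- Local constancy of the class. -/
lemma local_const {m : ℕ} {Λ : Set (ℝ × ℝ)} (hclosed : IsClosed Λ) (hper : Periodic2 Λ)
    (U : Set ℝ) (hU : IsOpen U) (hle : ∀ ξ ∈ U, (Img Λ ξ).encard ≤ m)
    (hdense : U ⊆ closure (U ∩ {ξ | (Img Λ ξ).encard = m}))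
    (φ : Fin m → ℝ → ℂ) (hφ : ∀ i, Integrable (φ i))
    (h : ∀ ξ ∈ U, (Img Λ ξ).encard = m → ∀ η ∈ Img Λ ξ,
      (∑ i : Fin m, FT (φ i) ξ * cexpEta η ^ (i : ℕ)) + cexpEta η ^ m = 0)
    (ξ : ℝ) (hξ : ξ ∈ U) (hξm : (Img Λ ξ).encard = m) :
    ∃ V : Set ℝ, IsOpen V ∧ ξ ∈ V ∧ V ⊆ U ∧ ∀ ζ ∈ V, (Img Λ ζ).encard = m := by
  classical
  obtain ⟨S, hS, hSm⟩ := values hξm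
  obtain ⟨δ, hδ, hsep⟩ : ∃ δ > 0, ∀ z ∈ S, ∀ w ∈ S, z ≠ w → 2 * δ < dist z w := by
    have : ∀ᶠ δ : ℝ in nhdsWithin 0 (Set.Ioi 0), ∀ z ∈ S, ∀ w ∈ S, z ≠ w → 2 * δ < dist z w := by
      rw [Filter.eventually_all_finset]
      intro z _
      rw [Filter.eventually_all_finset]
      intro w _
      by_cases hzw : z = w
      · simp [hzw]
      · have : ∀ᶠ δ : ℝ in nhds 0, 2 * δ < dist z w := by
          apply (continuous_const.mul continuous_id).tendsto (0 : ℝ) |>.eventually_lt_const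
          simpa using hzw
        exact (this.filter_mono nhdsWithin_le_nhds).mono (fun _ h _ => h)
    obtain ⟨δ, h1, h2⟩ := (this.and self_mem_nhdsWithin).exists
    exact ⟨δ, h2, h1⟩
  have hcont : ∀ z : ℂ, Continuous
      (fun ζ => (∑ i : Fin m, FT (φ i) ζ * z ^ (i : ℕ)) + z ^ m) := by
    intro z
    have := fun i => FT_continuous (hφ i)
    fun_prop
  let V : Set ℝ := U ∩ ⋂ z ∈ S,
    {ζ | ‖(∑ i : Fin m, FT (φ i) ζ * z ^ (i : ℕ)) + z ^ m‖ < δ ^ m}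
  have hVo : IsOpen V := hU.inter (isOpen_biInter_finset fun z _ =>
    isOpen_lt (hcont z).norm continuous_const)
  refine ⟨V, hVo, ⟨hξ, ?_⟩, Set.inter_subset_left, ?_⟩
  · simp only [Set.mem_iInter, Set.mem_ofPred_eq]
    intro z hz
    obtain ⟨η, h1, h2⟩ := (hSm z).1 hz
    have := h ξ hξ hξm η h1
    rw [h2] at this
    rw [this, norm_zero]
    positivity
  · intro ζ hζ
    have hz : ∀ z ∈ S, ∃ η ∈ Img Λ ζ, ‖cexpEta η - z‖ ≤ δ := by
      intro z hz
      have hsub : V ∩ {ξ | (Img Λ ξ).encard = m} ⊆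
          {ζ : ℝ | ∃ η ∈ Set.Icc (0 : ℝ) 2, (ζ, η) ∈ Λ ∧ ‖cexpEta η - z‖ ≤ δ} := by
        rintro x ⟨hxV, hxm⟩
        obtain ⟨T, hT, hTm⟩ := values hxm
        have hx2 := hxV.2
        simp only [Set.mem_iInter, Set.mem_ofPred_eq] at hx2
        obtain ⟨w, hw, hwz⟩ := root_close (fun i => FT (φ i) x) T hT (by
          intro w hw
          obtain ⟨η, h1, h2⟩ := (hTm w).1 hw
          rw [← h2]
          exact h x hxV.1 hxm η h1) δ hδ z (hx2 z hz)
        obtain ⟨η, h1, h2⟩ := (hTm w).1 hw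
        exact ⟨η, ⟨h1.1.1, h1.1.2.le⟩, h1.2, by rw [h2]; exact hwz.le⟩
      have hcl : ζ ∈ closure (V ∩ {ξ | (Img Λ ξ).encard = m}) := by
        have h1 := hVo.inter_closure (Set.mem_inter hζ (hdense hζ.1))
        have h2 : V ∩ (U ∩ {ξ | (Img Λ ξ).encard = m}) ⊆ V ∩ {ξ | (Img Λ ξ).encard = m} :=
          fun x hx => ⟨hx.1, hx.2.2⟩
        exact closure_mono h2 h1
      obtain ⟨η, _, h2, h3⟩ := closure_minimal hsub (closed_F hclosed z δ) hcl
      obtain ⟨η', h4, h5⟩ := reduce hper h2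
      exact ⟨η', h4, by rw [h5]; exact h3⟩
    choose! e he1 he2 using hz
    apply le_antisymm (hle ζ hζ.1)
    have hinj : Set.InjOn e S := by
      intro z hz w hw hzw
      by_contra hne
      have h1 := hsep z hz w hw hne
      have h2 := he2 z hz
      have h3 := he2 w hw
      rw [hzw, ← dist_eq_norm, dist_comm] at h2
      rw [← dist_eq_norm] at h3
      linarith [dist_triangle z (cexpEta (e w)) w]
    calc (m : ℕ∞) = (S : Set ℂ).encard := by rw [Set.encard_coe_eq_coe_finsetCard, hS]
      _ = (e '' S).encard := hinj.encard_image.symm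
      _ ≤ (Img Λ ζ).encard := Set.encard_le_encard (by rintro _ ⟨z, hz, rfl⟩; exact he1 z hz)

theorem necessary_part (n : ℕ) (hn : 2 ≤ n) (Λ : Set (ℝ × ℝ))
    (hclosed : IsClosed Λ) (hper : Periodic2 Λ) (hHUP : IsHUP n Λ) :
    Dense (projAtLeast Λ n ∪ (projExact Λ 1 \ projOneStar Λ n) ∪
      (projExact Λ (n - 1) \ projStarNe Λ (n - 1)) ∪
      ⋃ j ∈ Finset.Icc 2 (n - 2), (projExact Λ j \ projStarNe Λ j)) := by
  by_contra hD
  rw [dense_iff_inter_open] at hD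
  push Not at hD
  obtain ⟨W, hW, hWne, hWe⟩ := hD
  have hnot := fun ξ (hξ : ξ ∈ W) => fun hb => Set.notMem_empty ξ (hWe ▸ ⟨hξ, hb⟩)
  have hex : ∃ m : ℕ, ∃ U ⊆ W, IsOpen U ∧ U.Nonempty ∧ ∀ ξ ∈ U, (Img Λ ξ).encard ≤ m := by
    refine ⟨n - 1, W, le_rfl, hW, hWne, fun ξ hξ => ?_⟩
    by_contra hc
    rw [not_le] at hc
    apply hnot ξ hξ
    refine Or.inl (Or.inl (Or.inl ⟨mem_proj_of (by rintro h0; simp [h0] at hc), ?_⟩))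
    have := Order.add_one_le_of_lt hc
    calc (n : ℕ∞) = ((n - 1 : ℕ) : ℕ∞) + 1 := by
          norm_cast; omega
      _ ≤ _ := this
  classical
  obtain ⟨U, hUW, hU, hUne, hle⟩ := Nat.find_spec hex
  have hmin := fun k => Nat.find_min hex (m := k)
  have hmn : Nat.find hex ≤ n - 1 := by
    by_contra hc
    rw [not_le] at hc
    apply hmin _ hc
    refine ⟨W, le_rfl, hW, hWne, fun ξ hξ => ?_⟩
    by_contra hc
    rw [not_le] at hc
    apply hnot ξ hξ
    refine Or.inl (Or.inl (Or.inl ⟨mem_proj_of (by rintro h0; simp [h0] at hc), ?_⟩))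
    have := Order.add_one_le_of_lt hc
    calc (n : ℕ∞) = ((n - 1 : ℕ) : ℕ∞) + 1 := by
          norm_cast; omega
      _ ≤ _ := this
  generalize Nat.find hex = m at *
  rcases Nat.eq_zero_or_pos m with rfl | hm
  · refine finish (d := 0) (by omega) hper hHUP U hU hUne (fun _ _ => 0) (fun i => i.elim0) ?_
    intro ξ hξ η hη
    have := hle ξ hξ
    simp only [Nat.cast_zero, nonpos_iff_eq_zero, Set.encard_eq_zero] at this
    simp [this] at hη
  have hexm : ∀ V ⊆ U, IsOpen V → V.Nonempty → ∃ ξ ∈ V, (Img Λ ξ).encard = m := by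
    intro V hVU hV hVne
    by_contra! hc
    apply hmin (m - 1) (by omega)
    refine ⟨V, hVU.trans hUW, hV, hVne, fun ξ hξ => ?_⟩
    have h1 := lt_of_le_of_ne (hle ξ (hVU hξ)) (hc ξ hξ)
    apply Order.le_of_lt_add_one
    calc _ < (m : ℕ∞) := h1
      _ = ((m - 1 : ℕ) : ℕ∞) + 1 := by norm_cast; omega
  obtain ⟨ξ, hξ, hξm⟩ := hexm U le_rfl hU hUne
  have hpe : ∀ x, (Img Λ x).encard = m → x ∈ projExact Λ m := fun x hx =>
    ⟨mem_proj_of (by rw [hx]; exact_mod_cast hm.ne'), hx⟩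
  by_cases hm1 : m = 1
  · subst hm1
    have hstar : ξ ∈ projOneStar Λ n := by
      by_contra hc
      exact hnot ξ (hUW hξ) (Or.inl (Or.inl (Or.inr ⟨hpe ξ hξm, hc⟩)))
    obtain ⟨_, χ, hχ, a, b, hab, φ, hφ, hP⟩ := hstar
    refine finish (d := n - 1) (by omega) hper hHUP (U ∩ Set.Ioo a b) (hU.inter isOpen_Ioo)
      ⟨ξ, hξ, hab⟩ φ hφ ?_
    intro x hx η hη
    have hx1 : (Img Λ x).encard = (1 : ℕ) := by
      apply le_antisymm (hle x hx.1)
      rw [Nat.cast_one, Set.one_le_encard_iff_nonempty]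
      exact ⟨η, hη⟩
    have := hP x ⟨hx.2, hpe x hx1⟩
    rwa [hχ x (hpe x hx1) η hη] at this
  · have hstar : ξ ∈ projStarNe Λ m := by
      by_contra hc
      apply hnot ξ (hUW hξ)
      by_cases hmn1 : m = n - 1
      · subst hmn1
        exact Or.inl (Or.inr ⟨hpe ξ hξm, hc⟩)
      · refine Or.inr ?_
        simp only [Set.mem_iUnion]
        exact ⟨m, by rw [Finset.mem_Icc]; omega, hpe ξ hξm, hc⟩
    obtain ⟨_, a, b, hab, φ, hφ, hP⟩ := hstar
    have hP' : ∀ x ∈ U ∩ Set.Ioo a b, (Img Λ x).encard = m → ∀ η ∈ Img Λ x,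
      (∑ i : Fin m, FT (φ i) x * cexpEta η ^ (i : ℕ)) + cexpEta η ^ m = 0 := by
      intro x hx hxm η hη
      rw [hP x ⟨hx.2, hpe x hxm⟩ η hη]
      ring
    have hU' : IsOpen (U ∩ Set.Ioo a b) := hU.inter isOpen_Ioo
    obtain ⟨V, hV, hξV, hVU, hVm⟩ := local_const hclosed hper (U ∩ Set.Ioo a b) hU'
      (fun x hx => hle x hx.1) (by
        intro x hx
        rw [mem_closure_iff]
        intro O hO hxO
        obtain ⟨y, hy, hym⟩ := hexm (O ∩ (U ∩ Set.Ioo a b)) (fun y hy => hy.2.1)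
          (hO.inter hU') ⟨x, hxO, hx⟩
        exact ⟨y, hy.1, hy.2, hym⟩) φ hφ hP' ξ ⟨hξ, hab⟩ hξm
    exact finish (d := m) (by omega) hper hHUP V hV ⟨ξ, hξV⟩ φ hφ
      (fun x hx η hη => hP' x (hVU hx) (hVm x hx) η hη)
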